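/- There exist a constant R > 0 and a nonempty open interval I containing 0 such that for all a₃ ∈ ℝ ∖ {0} and a₄ ∈ ℝ there exists a function y(x), defined for all x with |a₄³ x| < R³ a₃⁴, such that { (x, y) ∈ ℝ² : |a₄³x| < R³a₃⁴, a₄ y ∈ a₃ I, and −x + a₃y³ + a₄y⁴ = 0 } = { (x, y(x)) : |a₄³x| < R³a₃⁴ }. Furthermore, y(x) is an analytic function of x^{1/3} (i.e., y(x) = Y(x^{1/3}) for a real-analytic Y), and it satisfies | y(x) − a₃^{−1/3}x^{1/3} + (1/3)a₃^{−5/3}a₄ x^{2/3} − (1/3)a₃^{−3}a₄² x | ≤ C |a₃|^{−13/3} |a₄|³ |x|^{4/3} for all |a₄³x| < R³a₃⁴, where the constant C is independent of a₃ and a₄. -/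

import Mathlib

open Real Set

noncomputable section

/-- The real cube root. -/
def cbrt (s : ℝ) : ℝ := Real.sign s * |s| ^ ((1 : ℝ) / 3)

lemma cbrt_pow_three (s : ℝ) : cbrt s ^ 3 = s := by
  unfold cbrt
  have h : (|s| ^ ((1 : ℝ) / 3)) ^ 3 = |s| := by
    rw [← Real.rpow_natCast, ← Real.rpow_mul (abs_nonneg s)]; norm_num
  rw [mul_pow, h]
  rcases lt_trichotomy s 0 with hs | hs | hs
  · rw [Real.sign_of_neg hs, abs_of_neg hs]; ring
  · simp [hs]
  · rw [Real.sign_of_pos hs, abs_of_pos hs]; ring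

lemma abs_rpow_cbrt (s : ℝ) (r : ℝ) : |s| ^ r = |cbrt s| ^ (3 * r) := by
  have h : |s| = |cbrt s| ^ (3 : ℝ) := by
    conv_lhs => rw [← cbrt_pow_three s, abs_pow]
    norm_cast
  rw [h, ← Real.rpow_mul (abs_nonneg _)]

lemma factor_lower (z u : ℝ) (hz : -1/8 ≤ z) (hu : -1/8 ≤ u) :
    (z ^ 2 + u ^ 2) / 4 ≤ z ^ 2 + z * u + u ^ 2 + (z + u) * (z ^ 2 + u ^ 2) := by
  nlinarith [sq_nonneg (z + u), mul_nonneg (by linarith : 0 ≤ z + u + 1/4)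
    (add_nonneg (sq_nonneg z) (sq_nonneg u))]

lemma h_inj (z u : ℝ) (hz : -1/8 ≤ z) (hu : -1/8 ≤ u)
    (h : z ^ 3 + z ^ 4 = u ^ 3 + u ^ 4) : z = u := by
  have hf := factor_lower z u hz hu
  have : (z - u) * (z ^ 2 + z * u + u ^ 2 + (z + u) * (z ^ 2 + u ^ 2)) = 0 := by
    linear_combination h
  rcases mul_eq_zero.mp this with h0 | h0
  · linarith
  · have hz0 : z ^ 2 = 0 := by nlinarith [sq_nonneg z, sq_nonneg u]
    have hu0 : u ^ 2 = 0 := by nlinarith [sq_nonneg z, sq_nonneg u]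
    rw [pow_eq_zero_iff two_ne_zero] at hz0 hu0
    rw [hz0, hu0]

lemma h_bound (z t : ℝ) (hz : -1/8 ≤ z) (ht : |t| < 1/10)
    (h : z ^ 3 + z ^ 4 = t ^ 3) : |z - (t - t ^ 2 / 3 + t ^ 3 / 3)| ≤ 160 * |t| ^ 4 := by
  obtain ⟨h1, h2⟩ := abs_lt.mp ht
  by_cases ht0 : t = 0
  · subst ht0
    have : z = 0 := h_inj z 0 hz (by norm_num) (by simpa using h)
    simp [this]
  set v := 1 - t / 3 + t ^ 2 / 3 with hv
  set u := t - t ^ 2 / 3 + t ^ 3 / 3 with hu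
  have huv : u = t * v := by rw [hu, hv]; ring
  have hv1 : 1/2 ≤ v := by nlinarith [sq_nonneg t]
  have hv2 : v ≤ 11/10 := by nlinarith
  have hu1 : -1/8 ≤ u := by rw [huv]; nlinarith
  have hf := factor_lower z u hz hu1
  have hu2 : t ^ 2 / 4 ≤ u ^ 2 := by
    rw [huv, mul_pow]; nlinarith [sq_nonneg t, mul_nonneg (sq_nonneg t) (by nlinarith : 0 ≤ v^2 - 1/4)]
  set F := z ^ 2 + z * u + u ^ 2 + (z + u) * (z ^ 2 + u ^ 2) with hF
  have hF1 : t ^ 2 / 16 ≤ F := by nlinarith [sq_nonneg z]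
  obtain ⟨q, hq⟩ : ∃ q, q = 35 / 27 - 28 / 27 * t + 82 / 81 * t ^ 2 - 37 / 81 * t ^ 3 + 2 / 9 * t ^ 4
      - 4 / 81 * t ^ 5 + t ^ 6 / 81 := ⟨_, rfl⟩
  have hq1 : |q| ≤ 10 := by
    have e : ∀ n : ℕ, |t ^ n| ≤ 1 := fun n => by
      rw [abs_pow]; exact pow_le_one₀ (abs_nonneg _) (by linarith)
    have e1 := abs_le.mp (e 1)
    have e2 := abs_le.mp (e 2)
    have e3 := abs_le.mp (e 3)
    have e4 := abs_le.mp (e 4)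
    have e5 := abs_le.mp (e 5)
    have e6 := abs_le.mp (e 6)
    rw [hq, abs_le]
    constructor <;> linarith
  have hmul : (z - u) * F = - (t ^ 6 * q) := by
    have : (z - u) * F = z ^ 3 + z ^ 4 - (u ^ 3 + u ^ 4) := by rw [hF]; ring
    rw [this, h, hq, hu]; ring
  have habs : |z - u| * F ≤ t ^ 6 * 10 := by
    have hFn : 0 ≤ F := le_trans (by positivity) hF1
    have : |z - u| * F = t ^ 6 * |q| := by
      rw [← abs_of_nonneg hFn, ← abs_mul, hmul, abs_neg, abs_mul,
        abs_of_nonneg (by positivity : 0 ≤ t ^ 6)]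
    rw [this]
    exact mul_le_mul_of_nonneg_left hq1 (by positivity)
  have ht2 : 0 < t ^ 2 := by positivity
  have h3 : |z - u| * (t ^ 2 / 16) ≤ t ^ 6 * 10 :=
    (mul_le_mul_of_nonneg_left hF1 (abs_nonneg _)).trans habs
  have h4 : |t| ^ 4 = t ^ 4 := by rw [← abs_pow, abs_of_nonneg (by positivity)]
  rw [h4]
  have : |z - u| * t ^ 2 ≤ (160 * t ^ 4) * t ^ 2 := by nlinarith
  exact le_of_mul_le_mul_right this ht2

/-- The analytic branch of the cube root of `z ^ 3 * (1 + z)`. -/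
def gfun (z : ℝ) : ℝ := z * Real.exp (Real.log (1 + z) / 3)

lemma gfun_cube (z : ℝ) (hz : -1 < z) : gfun z ^ 3 = z ^ 3 + z ^ 4 := by
  unfold gfun
  rw [mul_pow, ← Real.exp_nat_mul]
  have : ((3 : ℕ) : ℝ) * (Real.log (1 + z) / 3) = Real.log (1 + z) := by push_cast; ring
  rw [this, Real.exp_log (by linarith)]; ring

lemma gfun_analytic (z : ℝ) (hz : -1 < z) : AnalyticAt ℝ gfun z := by
  unfold gfun
  have h1 : AnalyticAt ℝ (fun z : ℝ => Real.log (1 + z)) z :=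
    (analyticAt_const.add analyticAt_id).log (by simp; linarith)
  exact analyticAt_id.mul ((h1.div analyticAt_const (by norm_num)).rexp)

lemma gfun_deriv (z : ℝ) (hz : -1/8 < z) : deriv gfun z ≠ 0 := by
  have hp : 0 < 1 + z := by linarith
  have h1 : HasDerivAt (fun z : ℝ => Real.log (1 + z)) (1 / (1 + z)) z :=
    ((hasDerivAt_id z).const_add 1).log hp.ne'
  have h2 : HasDerivAt gfun _ z := (hasDerivAt_id z).mul ((h1.div_const 3).exp)
  rw [h2.deriv]
  have he := Real.exp_pos (Real.log (1 + z) / 3)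
  have : 0 < 1 + z * (1 / (1 + z) / 3) := by
    have : 1 + z * (1 / (1 + z) / 3) = (1 + 4 * z / 3) / (1 + z) := by field_simp; ring
    rw [this]; apply div_pos <;> linarith
  have := mul_pos he this
  apply ne_of_gt
  simp only [id]
  linarith

lemma exists_sol (t : ℝ) (ht : |t| < 1/10) :
    ∃ z ∈ Ioo (-1/8 : ℝ) (1/8), z ^ 3 + z ^ 4 = t ^ 3 := by
  have h3 : |t ^ 3| < 1/1000 := by
    rw [abs_pow]
    calc |t| ^ 3 < (1/10) ^ 3 := pow_lt_pow_left₀ ht (abs_nonneg _) (by norm_num)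
      _ = _ := by norm_num
  obtain ⟨h1, h2⟩ := abs_lt.mp h3
  have hc : ContinuousOn (fun z : ℝ => z ^ 3 + z ^ 4) (Icc (-1/8) (1/8)) := by fun_prop
  have := intermediate_value_Ioo (by norm_num : (-1/8 : ℝ) ≤ 1/8) hc
  have hm : t ^ 3 ∈ Ioo ((fun z : ℝ => z ^ 3 + z ^ 4) (-1/8)) ((fun z : ℝ => z ^ 3 + z ^ 4) (1/8)) := by
    constructor <;> norm_num <;> linarith
  exact this hm

lemma exists_phi : ∃ φ : ℝ → ℝ,
    (∀ t, |t| < 1/10 → φ t ∈ Ioo (-1/8 : ℝ) (1/8) ∧ φ t ^ 3 + φ t ^ 4 = t ^ 3) ∧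
    (∀ t, |t| < 1/10 → AnalyticAt ℝ φ t) := by
  classical
  have key : ∀ t : ℝ, ∃ z : ℝ, (∃ z ∈ Ioo (-1/8 : ℝ) (1/8), z ^ 3 + z ^ 4 = t ^ 3) →
      z ∈ Ioo (-1/8 : ℝ) (1/8) ∧ z ^ 3 + z ^ 4 = t ^ 3 := by
    intro t
    by_cases h : ∃ z ∈ Ioo (-1/8 : ℝ) (1/8), z ^ 3 + z ^ 4 = t ^ 3
    · obtain ⟨z, hz⟩ := h
      exact ⟨z, fun _ => hz⟩
    · exact ⟨0, fun h' => absurd h' h⟩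
  choose φ hφ using key
  refine ⟨φ, fun t ht => hφ t (exists_sol t ht), fun t ht => ?_⟩
  obtain ⟨hm, he⟩ := hφ t (exists_sol t ht)
  have hg : gfun (φ t) = t := by
    have : gfun (φ t) ^ 3 = t ^ 3 := by rw [gfun_cube _ (by linarith [hm.1]), he]
    exact (Odd.strictMono_pow (by decide : Odd 3)).injective this
  have := analyticAt_comp_iff_of_deriv_ne_zero (g := φ)
    (gfun_analytic (φ t) (by linarith [hm.1])) (gfun_deriv _ hm.1)
  rw [hg] at this
  rw [← this]
  refine (analyticAt_id (𝕜 := ℝ)).congr ?_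
  filter_upwards [isOpen_Ioo.mem_nhds hm] with z hz
  have h := hφ (gfun z) ⟨z, hz, (gfun_cube z (by linarith [hz.1])).symm⟩
  rw [gfun_cube z (by linarith [hz.1])] at h
  exact (h_inj _ _ h.1.1.le hz.1.le h.2).symm

/-- **Quartic inversion.** There are `R > 0` and a nonempty open interval
`I ∋ 0` such that for all `a₃ ≠ 0`, `a₄`, the equation `−x + a₃y³ + a₄y⁴ = 0` has, for
`|a₄³x| < R³a₃⁴` and `a₄y ∈ a₃I`, a unique solution branch `y(x)`, which is an analytic
function of `x^{1/3}` and admits the stated third-order cube-root expansion. -/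
theorem quartic_inversion :
    ∃ R : ℝ, 0 < R ∧ ∃ lo hi : ℝ, lo < 0 ∧ 0 < hi ∧ ∃ C : ℝ,
      ∀ a₃ a₄ : ℝ, a₃ ≠ 0 →
        ∃ y : ℝ → ℝ,
          -- the solution set coincides with the graph of `y`
          ({p : ℝ × ℝ | |a₄ ^ 3 * p.1| < R ^ 3 * a₃ ^ 4 ∧
              a₄ * p.2 ∈ (fun r => a₃ * r) '' Ioo lo hi ∧
              -p.1 + a₃ * p.2 ^ 3 + a₄ * p.2 ^ 4 = 0}
            = {p : ℝ × ℝ | |a₄ ^ 3 * p.1| < R ^ 3 * a₃ ^ 4 ∧ p.2 = y p.1}) ∧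
          -- `y` is an analytic function of `x^{1/3}`
          (∃ Y : ℝ → ℝ,
            AnalyticOnNhd ℝ Y {s : ℝ | |a₄ ^ 3 * s ^ 3| < R ^ 3 * a₃ ^ 4} ∧
            ∀ x : ℝ, |a₄ ^ 3 * x| < R ^ 3 * a₃ ^ 4 → y x = Y (cbrt x)) ∧
          -- the cube-root expansion, with constant independent of `a₃, a₄`
          ∀ x : ℝ, |a₄ ^ 3 * x| < R ^ 3 * a₃ ^ 4 →
            |y x - (cbrt a₃)⁻¹ * cbrt x
                + 1 / 3 * (cbrt a₃) ^ (-5 : ℤ) * a₄ * cbrt x ^ 2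
                - 1 / 3 * a₃ ^ (-3 : ℤ) * a₄ ^ 2 * x|
              ≤ C * |a₃| ^ (-(13 : ℝ) / 3) * |a₄| ^ 3 * |x| ^ ((4 : ℝ) / 3) := by
  refine ⟨1/10, by norm_num, -1/8, 1/8, by norm_num, by norm_num, 160, ?_⟩
  obtain ⟨φ, hφ, hφa⟩ := exists_phi
  intro a₃ a₄ h₃
  obtain ⟨b, hb⟩ : ∃ b, b = cbrt a₃ := ⟨_, rfl⟩
  have hb3 : a₃ = b ^ 3 := by rw [hb, cbrt_pow_three]
  have hb0 : b ≠ 0 := by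
    intro h
    exact h₃ (by rw [hb3, h]; norm_num)
  have cube_inj : ∀ p q : ℝ, p ^ 3 = q ^ 3 → p = q := fun p q h =>
    (Odd.strictMono_pow (by decide : Odd 3)).injective h
  have hR : ∀ x, |x| ^ ((4 : ℝ) / 3) = cbrt x ^ 4 := fun x => by
    rw [abs_rpow_cbrt, show (3 : ℝ) * (4 / 3) = ((4 : ℕ) : ℝ) by norm_num, Real.rpow_natCast,
      ← abs_pow, abs_of_nonneg (by positivity)]
  by_cases h₄ : a₄ = 0
  · subst h₄
    refine ⟨fun x => b⁻¹ * cbrt x, ?_, ⟨fun s => b⁻¹ * s, ?_, fun x _ => rfl⟩, ?_⟩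
    · ext ⟨x, y⟩
      simp only [mem_setOf_eq]
      refine and_congr_right fun _ => ⟨fun ⟨_, h⟩ => ?_, fun h => ⟨⟨0, by norm_num, by simp⟩, ?_⟩⟩
      · apply cube_inj
        rw [mul_pow, cbrt_pow_three, inv_pow, ← hb3]
        field_simp
        linarith
      · rw [h, mul_pow, cbrt_pow_three, inv_pow, ← hb3]
        field_simp
        ring
    · intro s _
      exact analyticAt_const.mul analyticAt_id
    · intro x _
      rw [← hb]
      simp
  · have hsm : ∀ s : ℝ, |a₄ ^ 3 * s ^ 3| < (1/10) ^ 3 * a₃ ^ 4 → |a₄ / b ^ 4 * s| < 1/10 := by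
      intro s hs
      have h1 : |a₄ / b ^ 4 * s| ^ 3 < (1/10) ^ 3 := by
        rw [← abs_pow]
        have e : (a₄ / b ^ 4 * s) ^ 3 = (a₄ ^ 3 * s ^ 3) / a₃ ^ 4 := by
          rw [hb3]; field_simp
        have hp : (0:ℝ) < a₃ ^ 4 := by positivity
        rw [e, abs_div, abs_of_pos hp, div_lt_iff₀ hp]
        exact hs
      exact lt_of_pow_lt_pow_left₀ 3 (by norm_num) h1
    have hsx : ∀ x : ℝ, |a₄ ^ 3 * x| < (1/10) ^ 3 * a₃ ^ 4 → |a₄ / b ^ 4 * cbrt x| < 1/10 := by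
      intro x hx
      apply hsm
      rwa [cbrt_pow_three]
    refine ⟨fun x => a₃ / a₄ * φ (a₄ / b ^ 4 * cbrt x), ?_,
      ⟨fun s => a₃ / a₄ * φ (a₄ / b ^ 4 * s), ?_, fun x _ => rfl⟩, ?_⟩
    · ext ⟨x, y⟩
      simp only [mem_setOf_eq]
      refine and_congr_right fun hx => ?_
      obtain ⟨hm, he⟩ := hφ _ (hsx x hx)
      have ht3 : (a₄ / b ^ 4 * cbrt x) ^ 3 = a₄ ^ 3 * x / a₃ ^ 4 := by
        rw [mul_pow, cbrt_pow_three, hb3]; field_simp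
      rw [ht3] at he
      constructor
      · rintro ⟨⟨r, hr, hry⟩, h⟩
        have hy : y = a₃ / a₄ * r := by
          field_simp; simp only at hry; linarith
        rw [hy]
        congr 1
        apply h_inj _ _ hr.1.le hm.1.le
        rw [he]
        have hx' : x = a₃ * y ^ 3 + a₄ * y ^ 4 := by linarith
        rw [hx', hy]
        field_simp
      · intro h
        refine ⟨⟨_, hm, ?_⟩, ?_⟩
        · rw [h]; field_simp
        · rw [h]
          generalize φ (a₄ / b ^ 4 * cbrt x) = z at *
          have : x = (z ^ 3 + z ^ 4) * a₃ ^ 4 / a₄ ^ 3 := by rw [he]; field_simp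
          rw [this]
          field_simp
          ring
    · intro s hs
      have h1 := hφa _ (hsm s hs)
      exact analyticAt_const.mul (h1.comp' (analyticAt_const.mul analyticAt_id))
    · intro x hx
      obtain ⟨hm, he⟩ := hφ _ (hsx x hx)
      have hbd := h_bound _ _ hm.1.le (hsx x hx) he
      have hA : |a₃| ^ (-(13 : ℝ) / 3) = (|b| ^ 13)⁻¹ := by
        rw [abs_rpow_cbrt, ← hb, show (3 : ℝ) * (-13 / 3) = -((13 : ℕ) : ℝ) by norm_num,
          Real.rpow_neg (abs_nonneg _), Real.rpow_natCast]
      rw [hR, hA, ← hb]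
      obtain ⟨c, hc⟩ : ∃ c, c = cbrt x := ⟨_, rfl⟩
      have hxc : x = c ^ 3 := by rw [hc, cbrt_pow_three]
      simp only [← hc] at hbd ⊢
      rw [hxc]
      generalize φ (a₄ / b ^ 4 * c) = z at *
      have hexp : a₃ / a₄ * z - b⁻¹ * c + 1 / 3 * b ^ (-5 : ℤ) * a₄ * c ^ 2
          - 1 / 3 * a₃ ^ (-3 : ℤ) * a₄ ^ 2 * c ^ 3
          = a₃ / a₄ * (z - (a₄ / b ^ 4 * c - (a₄ / b ^ 4 * c) ^ 2 / 3
            + (a₄ / b ^ 4 * c) ^ 3 / 3)) := by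
        rw [hb3, zpow_neg, zpow_neg]
        norm_cast
        field_simp
        ring
      rw [hexp, abs_mul]
      refine (mul_le_mul_of_nonneg_left hbd (abs_nonneg _)).trans (le_of_eq ?_)
      rw [hb3, abs_div, abs_mul, abs_div, abs_pow, abs_pow,
        show c ^ 4 = |c| ^ 4 by rw [← abs_pow, abs_of_nonneg (by positivity)]]
      have : |b| ≠ 0 := abs_ne_zero.mpr hb0
      have : |a₄| ≠ 0 := abs_ne_zero.mpr h₄
      field_simp
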